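/- Let m > n ≥ 2 and let P = {a_1, …, a_m} be m points ordered anticlockwise on a circle. Consider the polynomial ring K[x_{ij} : n < i ≤ m, 1 ≤ j ≤ n], the coordinate ring of the subspace of m×n matrices whose first n rows form the identity matrix (so x_{ij} = δ_{ij} for 1 ≤ i ≤ n), equipped with the standard Poisson–Lie bracket determined on coordinates by {x_{ij}, x_{i'j'}}_B = (1/2)·(△(i'−i) + △(j'−j))·x_{ij'}·x_{i'j}, where △ denotes the sign function. Then the algebra homomorphism φ from this polynomial ring to the rank n swapping ring Z_n(P) defined by φ(x_{ij}) = a_i a_j is injective and is Poisson with respect to {·,·}_B and the swapping bracket on Z_n(P). -/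

import Mathlib

noncomputable section

open scoped Classical
open MvPolynomial

set_option maxHeartbeats 1000000
set_option synthInstance.maxHeartbeats 400000

instance fact01 : Fact ((0:ℝ) < 1) := ⟨one_pos⟩

/-- The circle, modelled as `ℝ/ℤ`. -/
abbrev Circle1 : Type := AddCircle (1:ℝ)

/-- The coordinate in `[0,1)` of the point `x` of the circle obtained after removing the
point `o` and identifying the complement of `o` with an interval. -/
def coordAt (o x : Circle1) : ℝ := ((AddCircle.equivIco 1 0) (x - o) : ℝ)

/-- The sign `△` of a real number, as a rational number in `{-1, 0, 1}`. -/
def sgnQ (a : ℝ) : ℚ := if a < 0 then -1 else if a = 0 then 0 else 1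

/-- The linking number `J(rx, sy)` of the chords `rx` and `sy`, computed using the
cut point `o`. -/
def linkingAt (o r x s y : Circle1) : ℚ :=
  (1/2) * (sgnQ (coordAt o r - coordAt o x) * sgnQ (coordAt o r - coordAt o y)
        * sgnQ (coordAt o y - coordAt o x)
      - sgnQ (coordAt o r - coordAt o x) * sgnQ (coordAt o r - coordAt o s)
        * sgnQ (coordAt o s - coordAt o x))

lemma circle1_infinite : Infinite Circle1 := by
  have h : (Set.Ico (0:ℝ) (0+1)).Infinite := Set.Ico_infinite (by norm_num)
  haveI := h.to_subtype
  exact Infinite.of_injective (fun q : Set.Ico (0:ℝ) (0+1) => (AddCircle.equivIco 1 0).symm q)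
    ((AddCircle.equivIco 1 0).symm.injective)

lemma exists_cut (r x s y : Circle1) :
    ∃ o : Circle1, o ≠ r ∧ o ≠ x ∧ o ≠ s ∧ o ≠ y := by
  haveI : Infinite Circle1 := circle1_infinite
  have hfin : ({r, x, s, y} : Set Circle1).Finite :=
    (((Set.finite_singleton y).insert s).insert x).insert r
  obtain ⟨o, ho⟩ := hfin.infinite_compl.nonempty
  simp only [Set.mem_compl_iff, Set.mem_insert_iff, Set.mem_singleton_iff, not_or] at ho
  exact ⟨o, ho.1, ho.2.1, ho.2.2.1, ho.2.2.2⟩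

/-- The linking number `J(rx, sy)` of the chords `rx` and `sy` (computed with respect to
some cut point distinct from the four points; by the independence of the choice this is
the linking number). -/
def linkQ (r x s y : Circle1) : ℚ := linkingAt (exists_cut r x s y).choose r x s y

/-- The set of points of the circle `l`, listed in anticlockwise (cyclic) order:
there is a cut point `o` avoiding them such that the induced coordinates are
strictly increasing along the list. -/
def AnticlockwiseList (l : List Circle1) : Prop :=
  ∃ o : Circle1, (∀ p ∈ l, p ≠ o) ∧ (l.map (coordAt o)).Chain' (· < ·)

/-- Index type for the generators `xy` of the swapping ring of `P`
(one generator for each ordered pair of distinct points; the generators `xx`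
are identified with `0`). -/
abbrev SwapIdx (P : Set Circle1) : Type := {q : (↥P) × (↥P) // q.1 ≠ q.2}

/-- The swapping ring `Z(P)`: the polynomial ring over `K` on the generators `xy`,
`x ≠ y ∈ P` (this realizes the commutative ring generated by all ordered pairs `xy`
subject to the relations `xx = 0`). -/
abbrev SwapRing (K : Type) [Field K] (P : Set Circle1) : Type := MvPolynomial (SwapIdx P) K

/-- The generator `xy` of the swapping ring (equal to `0` when `x = y`). -/
def gen (K : Type) [Field K] (P : Set Circle1) (x y : ↥P) : SwapRing K P :=
  if h : x ≠ y then MvPolynomial.X (⟨(x, y), h⟩ : SwapIdx P) else 0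

/-- The value of the `(c1,c2)`-swapping bracket on two generators `rx` and `sy`:
`J(rx,sy) • (c1 • ry·sx + c2 • rx·sy)`. -/
def genBr (K : Type) [Field K] (P : Set Circle1) (c1 c2 : K) (g g' : SwapIdx P) :
    SwapRing K P :=
  ((linkQ g.1.1.1 g.1.2.1 g'.1.1.1 g'.1.2.1 : ℚ) : K) •
    (c1 • (gen K P g.1.1 g'.1.2 * gen K P g'.1.1 g.1.2)
      + c2 • (gen K P g.1.1 g.1.2 * gen K P g'.1.1 g'.1.2))

/-- The `(c1,c2)`-swapping bracket on `Z(P)`: the biderivation extending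
`{rx, sy} = J(rx,sy)·(c1·ry·sx + c2·rx·sy)` by the Leibniz rule in each argument.
The swapping bracket is the case `c1 = 1, c2 = 0`. -/
def swapBr (K : Type) [Field K] (P : Set Circle1) (c1 c2 : K) (a b : SwapRing K P) :
    SwapRing K P :=
  (MvPolynomial.mkDerivation K
    (fun g : SwapIdx P => (MvPolynomial.mkDerivation K (genBr K P c1 c2 g)) b)) a

/-- `Δ((x_1,…,x_m),(y_1,…,y_m)) = det (x_i y_j)` in the swapping ring. -/
def Dmat (K : Type) [Field K] (P : Set Circle1) (m : ℕ) (xs ys : Fin m → ↥P) :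
    SwapRing K P :=
  Matrix.det (Matrix.of fun i j => gen K P (xs i) (ys j))

/-- The ideal `R_n(P)` of `Z(P)` generated by all `(n+1)×(n+1)` determinants
`Δ((x_1,…,x_{n+1}),(y_1,…,y_{n+1}))`. -/
def Rideal (K : Type) [Field K] (P : Set Circle1) (n : ℕ) : Ideal (SwapRing K P) :=
  Ideal.span {D : SwapRing K P | ∃ xs ys : Fin (n+1) → ↥P, D = Dmat K P (n+1) xs ys}

/-- The rank `n` swapping ring `Z_n(P) = Z(P)/R_n(P)`. -/
abbrev ZnRing (K : Type) [Field K] (P : Set Circle1) (n : ℕ) : Type :=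
  SwapRing K P ⧸ Rideal K P n

/-- The quotient map `Z(P) → Z_n(P)`. -/
def toZn (K : Type) [Field K] (P : Set Circle1) (n : ℕ) :
    SwapRing K P →+* ZnRing K P n := Ideal.Quotient.mk (Rideal K P n)

/-- The total fraction ring `Q_n(P)` of the rank `n` swapping ring. -/
abbrev QnRing (K : Type) [Field K] (P : Set Circle1) (n : ℕ) : Type :=
  Localization (nonZeroDivisors (ZnRing K P n))

/-- The canonical map `Z(P) → Q_n(P)`. -/
def toQn (K : Type) [Field K] (P : Set Circle1) (n : ℕ) :
    SwapRing K P →+* QnRing K P n :=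
  (algebraMap (ZnRing K P n) (QnRing K P n)).comp (toZn K P n)

/-- `Bq` is the extension to the total fraction ring `Q_n(P)` of the `(c1,c2)`-swapping
bracket of the rank `n` swapping algebra: it agrees with the swapping bracket on the image
of `Z(P)` and satisfies the Leibniz rule in both arguments (these properties determine it
uniquely). -/
def IsQnBracket (K : Type) [Field K] (P : Set Circle1) (n : ℕ) (c1 c2 : K)
    (Bq : QnRing K P n → QnRing K P n → QnRing K P n) : Prop :=
  (∀ a b : SwapRing K P,
      Bq (toQn K P n a) (toQn K P n b) = toQn K P n (swapBr K P c1 c2 a b)) ∧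
  (∀ a b c : QnRing K P n, Bq (a * b) c = a * Bq b c + b * Bq a c) ∧
  (∀ a b c : QnRing K P n, Bq a (b * c) = b * Bq a c + c * Bq a b)

/-- The `n`-tuple `(x_1, …, x_a, y_1, …, y_b, z_1, …, z_{n-a-b})` built from three
families of points (families are indexed from `0`, i.e. `x 0 = x_1`). -/
def rows3 {α : Type*} {n : ℕ} (x y z : ℕ → α) (a b : ℕ) : Fin n → α :=
  fun i => if (i : ℕ) < a then x (i : ℕ)
    else if (i : ℕ) < a + b then y ((i : ℕ) - a)
    else z ((i : ℕ) - (a + b))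

/-- The `n`-tuple `(x_1, …, x_a, y_1, …, y_b, z_1, …, z_{n-1-a-b}, w)` built from three
families of points and a final point `w`. -/
def rows3s {α : Type*} {n : ℕ} (x y z : ℕ → α) (a b : ℕ) (w : α) : Fin n → α :=
  fun i => if (i : ℕ) < a then x (i : ℕ)
    else if (i : ℕ) < a + b then y ((i : ℕ) - a)
    else if (i : ℕ) < n - 1 then z ((i : ℕ) - (a + b))
    else w

/-- The `n`-tuple `(x_1, …, x_{n-1}, t)`. -/
def snocTup {α : Type*} {n : ℕ} (x : ℕ → α) (t : α) : Fin n → α :=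
  fun i => if (i : ℕ) < n - 1 then x (i : ℕ) else t

/-- The list `f_a, f_{a-1}, …, f_1` (descending enumeration). -/
def descPts (f : ℕ → Circle1) (a : ℕ) : List Circle1 := ((List.range a).map f).reverse

/-- The list `f_1, f_2, …, f_a` (ascending enumeration). -/
def ascPts (f : ℕ → Circle1) (a : ℕ) : List Circle1 := (List.range a).map f

/-- The `(n×n)`-determinant quotient `Δ(numR, v)/Δ(denR, v)` as an element of the total
fraction ring `Q_n(P)`. -/
def EQuot (K : Type) [Field K] (P : Set Circle1) (n : ℕ)
    (numR denR v : Fin n → ↥P)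
    (h : toZn K P n (Dmat K P n denR v) ∈ nonZeroDivisors (ZnRing K P n)) :
    QnRing K P n :=
  Localization.mk (toZn K P n (Dmat K P n numR v)) ⟨toZn K P n (Dmat K P n denR v), h⟩


/-- Index type for the coordinates `x_{ij}`, `n < i ≤ m`, `1 ≤ j ≤ n`, of the subspace of
`m × n` matrices whose first `n` rows form the identity matrix. -/
abbrev PLIdx (m n : ℕ) : Type := {ij : ℕ × ℕ // n < ij.1 ∧ ij.1 ≤ m ∧ 1 ≤ ij.2 ∧ ij.2 ≤ n}

/-- The value of the standard Poisson–Lie bracket on two coordinate functions: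
`{x_{ij}, x_{i'j'}}_B = (1/2)(△(i'-i) + △(j'-j)) · x_{ij'} · x_{i'j}`. -/
def genPL (K : Type) [Field K] (m n : ℕ) (g g' : PLIdx m n) : MvPolynomial (PLIdx m n) K :=
  ((((1:ℚ)/2) * (sgnQ ((g'.1.1 : ℝ) - (g.1.1 : ℝ)) + sgnQ ((g'.1.2 : ℝ) - (g.1.2 : ℝ))) : ℚ) : K) •
    (MvPolynomial.X (⟨(g.1.1, g'.1.2), g.2.1, g.2.2.1, g'.2.2.2.1, g'.2.2.2.2⟩ : PLIdx m n)
      * MvPolynomial.X (⟨(g'.1.1, g.1.2), g'.2.1, g'.2.2.1, g.2.2.2.1, g.2.2.2.2⟩ : PLIdx m n))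

/-- The standard Poisson–Lie bracket on the coordinate ring `K[x_{ij}]` of the subspace
`{x_{ij} = δ_{ij} for 1 ≤ i ≤ n}` of `m × n` matrices, extended from the coordinate
functions by the Leibniz rule in each argument. -/
def brPL (K : Type) [Field K] (m n : ℕ) (a b : MvPolynomial (PLIdx m n) K) :
    MvPolynomial (PLIdx m n) K :=
  (MvPolynomial.mkDerivation K
    (fun g : PLIdx m n => (MvPolynomial.mkDerivation K (genPL K m n g)) b)) a

/-- The algebra homomorphism `φ` from the coordinate ring of the matrix subspace to the
rank `n` swapping ring of `P = {a_1, …, a_m}`, defined by `φ(x_{ij}) = a_i a_j`. -/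
def phiPL (K : Type) [Field K] (m n : ℕ) (a : ℕ → Circle1) :
    MvPolynomial (PLIdx m n) K →ₐ[K] ZnRing K (a '' Set.Icc 1 m) n :=
  MvPolynomial.aeval (fun g : PLIdx m n =>
    toZn K (a '' Set.Icc 1 m) n (gen K (a '' Set.Icc 1 m)
      ⟨a g.1.1, ⟨g.1.1, Set.mem_Icc.mpr ⟨by have := g.2.1; omega, g.2.2.1⟩, rfl⟩⟩
      ⟨a g.1.2, ⟨g.1.2, Set.mem_Icc.mpr ⟨g.2.2.2.1,
          by have := g.2.1; have := g.2.2.1; have := g.2.2.2.2; omega⟩, rfl⟩⟩))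

lemma coordAt_mem (o x : Circle1) : 0 ≤ coordAt o x ∧ coordAt o x < 1 := by
  have h := ((AddCircle.equivIco (1:ℝ) 0) (x - o)).2
  refine ⟨h.1, ?_⟩
  have := h.2
  simpa [coordAt] using this

lemma coordAt_coe (o x : Circle1) : ((coordAt o x : ℝ) : Circle1) = x - o :=
  AddCircle.coe_equivIco

lemma coordAt_change (o o' x : Circle1) :
    coordAt o' x = if coordAt o o' ≤ coordAt o x then coordAt o x - coordAt o o'
      else coordAt o x - coordAt o o' + 1 := by
  have h : ((coordAt o' x : ℝ) : Circle1) = ((coordAt o x - coordAt o o' : ℝ) : Circle1) := by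
    rw [AddCircle.coe_sub, coordAt_coe, coordAt_coe, coordAt_coe]; abel
  have h2 : ((coordAt o' x - (coordAt o x - coordAt o o') : ℝ) : Circle1) = 0 := by
    rw [AddCircle.coe_sub, h, sub_self]
  rw [AddCircle.coe_eq_zero_iff] at h2
  obtain ⟨z, hz⟩ := h2
  have h0 := coordAt_mem o x
  have h1 := coordAt_mem o o'
  have h3 := coordAt_mem o' x
  simp only [zsmul_eq_mul, mul_one] at hz
  have ha : (-1 : ℝ) < z := by linarith [h0.1, h0.2, h1.1, h1.2, h3.1, h3.2]
  have ha : (-1 : ℤ) < z := by exact_mod_cast ha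
  have hb : (z : ℝ) < 2 := by linarith
  have hb : z < 2 := by exact_mod_cast hb
  have : z = 0 ∨ z = 1 := by omega
  rcases this with rfl | rfl
  · push_cast at hz
    split_ifs <;> linarith
  · push_cast at hz
    split_ifs <;> linarith

def triS (r x y : ℝ) : ℚ := sgnQ (r - x) * sgnQ (r - y) * sgnQ (y - x)

lemma triS_rot (c r x y : ℝ) (hr : 0 ≤ r ∧ r < 1) (hx : 0 ≤ x ∧ x < 1) (hy : 0 ≤ y ∧ y < 1) :
    triS (if c ≤ r then r - c else r - c + 1) (if c ≤ x then x - c else x - c + 1)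
      (if c ≤ y then y - c else y - c + 1) = triS r x y := by
  obtain ⟨hr0, hr1⟩ := hr
  obtain ⟨hx0, hx1⟩ := hx
  obtain ⟨hy0, hy1⟩ := hy
  have neg : ∀ t : ℝ, t < 0 → sgnQ t = -1 := fun t h => by simp [sgnQ, h]
  have zer : ∀ t : ℝ, t = 0 → sgnQ t = 0 := fun t h => by simp [sgnQ, h]
  have pos : ∀ t : ℝ, 0 < t → sgnQ t = 1 := fun t h => by
    simp [sgnQ, h.not_gt, h.ne']
  have key : ∀ u v : ℝ, 0 ≤ u → u < 1 → 0 ≤ v → v < 1 →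
      sgnQ ((if c ≤ u then u - c else u - c + 1) - (if c ≤ v then v - c else v - c + 1))
        = if (c ≤ u ↔ c ≤ v) then sgnQ (u - v) else if c ≤ u then -1 else 1 := by
    intro u v hu0 hu1 hv0 hv1
    by_cases h1 : c ≤ u <;> by_cases h2 : c ≤ v <;> simp only [h1, h2, if_true, if_false, iff_self,
      iff_true, iff_false, true_iff, not_true, not_false_iff]
    · congr 1; ring
    · exact neg _ (by linarith)
    · exact pos _ (by linarith)
    · congr 1; ring
  unfold triS
  rw [key r x hr0 hr1 hx0 hx1, key r y hr0 hr1 hy0 hy1, key y x hy0 hy1 hx0 hx1]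
  have p1 : ∀ u v : ℝ, c ≤ u → ¬ c ≤ v → sgnQ (u - v) = 1 := fun u v h h' => pos _ (by linarith)
  have p2 : ∀ u v : ℝ, ¬ c ≤ u → c ≤ v → sgnQ (u - v) = -1 := fun u v h h' => neg _ (by linarith)
  have anti : ∀ t s : ℝ, sgnQ (t - s) = - sgnQ (s - t) := by
    intro t s
    rcases lt_trichotomy t s with h | h | h
    · rw [neg _ (by linarith), pos _ (by linarith)]
    · rw [zer _ (by linarith), zer _ (by linarith)]; simp
    · rw [pos _ (by linarith), neg _ (by linarith)]; simp
  by_cases h1 : c ≤ r <;> by_cases h2 : c ≤ x <;> by_cases h3 : c ≤ y <;>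
    simp [h1, h2, h3, p1, p2]

lemma linkingAt_indep (o o' r x s y : Circle1) : linkingAt o' r x s y = linkingAt o r x s y := by
  have e : ∀ o, linkingAt o r x s y = (1/2) * (triS (coordAt o r) (coordAt o x) (coordAt o y)
      - triS (coordAt o r) (coordAt o x) (coordAt o s)) := fun o => rfl
  rw [e, e, coordAt_change o o' r, coordAt_change o o' x, coordAt_change o o' s,
    coordAt_change o o' y, triS_rot _ _ _ _ (coordAt_mem _ _) (coordAt_mem _ _) (coordAt_mem _ _),
    triS_rot _ _ _ _ (coordAt_mem _ _) (coordAt_mem _ _) (coordAt_mem _ _)]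

lemma coord_mono {m : ℕ} {a : ℕ → Circle1} {o : Circle1}
    (h : (((List.range m).map (fun k => a (k+1))).map (coordAt o)).Chain' (· < ·))
    {i j : ℕ} (hi : 1 ≤ i) (hij : i < j) (hj : j ≤ m) : coordAt o (a i) < coordAt o (a j) := by
  have h' := List.isChain_iff_pairwise.1 h
  rw [List.pairwise_iff_getElem] at h'
  have := h' (i-1) (j-1) (by simp; omega) (by simp; omega) (by omega)
  simpa [Nat.sub_add_cancel hi, Nat.sub_add_cancel (hi.trans hij.le)] using this

lemma sgn_eq_of_mono {f : ℕ → ℝ} {m : ℕ}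
    (h : ∀ i j, 1 ≤ i → i < j → j ≤ m → f i < f j) (i j : ℕ) (hi : 1 ≤ i) (hj : 1 ≤ j)
    (him : i ≤ m) (hjm : j ≤ m) : sgnQ (f i - f j) = sgnQ ((i:ℝ) - j) := by
  rcases lt_trichotomy i j with hl | rfl | hl
  · have h1 := h i j hi hl hjm
    have h2 : (i:ℝ) < j := by exact_mod_cast hl
    simp [sgnQ, h1, h2]
  · simp
  · have h1 := h j i hj hl him
    have h2 : (j:ℝ) < i := by exact_mod_cast hl
    have h3 := sub_pos.2 h1
    have h4 := sub_pos.2 h2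
    simp only [sgnQ, h3.not_gt, h3.ne', h4.not_gt, h4.ne']

lemma linkQ_pl {m n : ℕ} {a : ℕ → Circle1} {o : Circle1}
    (h : (((List.range m).map (fun k => a (k+1))).map (coordAt o)).Chain' (· < ·))
    (g g' : PLIdx m n) :
    linkQ (a g.1.1) (a g.1.2) (a g'.1.1) (a g'.1.2) =
      ((1:ℚ)/2) * (sgnQ ((g'.1.1 : ℝ) - (g.1.1 : ℝ)) + sgnQ ((g'.1.2 : ℝ) - (g.1.2 : ℝ))) := by
  obtain ⟨⟨i, j⟩, h1, h2, h3, h4⟩ := g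
  obtain ⟨⟨i', j'⟩, h1', h2', h3', h4'⟩ := g'
  simp only at *
  have key := sgn_eq_of_mono (f := fun i => coordAt o (a i)) (m := m)
    (fun i j hi hij hj => coord_mono h hi hij hj)
  have pos : ∀ i j : ℕ, j < i → sgnQ ((i:ℝ) - j) = 1 := by
    intro i j hl
    have h2 : (j:ℝ) < i := by exact_mod_cast hl
    have h4 := sub_pos.2 h2
    simp [sgnQ, h4.not_gt, h4.ne']
  have anti : ∀ t s : ℝ, sgnQ (t - s) = - sgnQ (s - t) := by
    intro t s
    rcases lt_trichotomy t s with h | h | h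
    · simp [sgnQ, h, h.not_gt, (sub_pos.2 h).ne']
    · simp [sgnQ, h]
    · simp [sgnQ, h, h.not_gt, (sub_pos.2 h).ne']
  rw [linkQ, linkingAt_indep o]
  unfold linkingAt
  rw [key i j (by omega) (by omega) (by omega) (by omega),
    key i j' (by omega) (by omega) (by omega) (by omega),
    key j' j (by omega) (by omega) (by omega) (by omega),
    key i i' (by omega) (by omega) (by omega) (by omega),
    key i' j (by omega) (by omega) (by omega) (by omega),
    pos i j (by omega), pos i j' (by omega), pos i' j (by omega), anti i i']
  ring

lemma deriv_transfer {K σ S : Type} [Field K] [CommRing S] [Algebra K S]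
    (Φ : MvPolynomial σ K →ₐ[K] S) (D : Derivation K (MvPolynomial σ K) (MvPolynomial σ K))
    (D' : Derivation K S S) (h : ∀ i, Φ (D (X i)) = D' (Φ (X i))) (f : MvPolynomial σ K) :
    Φ (D f) = D' (Φ f) := by
  induction f using MvPolynomial.induction_on with
  | C r =>
    have e : (C r : MvPolynomial σ K) = algebraMap K _ r := rfl
    rw [e, Derivation.map_algebraMap, AlgHom.commutes, Derivation.map_algebraMap, map_zero]
  | add p q hp hq => simp [hp, hq]
  | mul_X p i hp => simp [hp, h]

/-- A point of the configuration. -/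
def ptPL (a : ℕ → Circle1) (m i : ℕ) (h : 1 ≤ i ∧ i ≤ m) : ↥(a '' Set.Icc 1 m) :=
  ⟨a i, ⟨i, h, rfl⟩⟩

lemma gen_of_ne (K : Type) [Field K] (P : Set Circle1) (x y : ↥P) (h : x ≠ y) :
    gen K P x y = X (⟨(x, y), h⟩ : SwapIdx P) := dif_pos h

/-- The lift of `phiPL` to the swapping ring. -/
def PhiL (K : Type) [Field K] (m n : ℕ) (a : ℕ → Circle1) :
    MvPolynomial (PLIdx m n) K →ₐ[K] SwapRing K (a '' Set.Icc 1 m) :=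
  MvPolynomial.aeval (fun g : PLIdx m n =>
    gen K (a '' Set.Icc 1 m)
      (ptPL a m g.1.1 ⟨by have := g.2.1; omega, g.2.2.1⟩)
      (ptPL a m g.1.2 ⟨g.2.2.2.1,
          by have := g.2.1; have := g.2.2.1; have := g.2.2.2.2; omega⟩))

lemma phi_eq (K : Type) [Field K] (m n : ℕ) (a : ℕ → Circle1) (f : MvPolynomial (PLIdx m n) K) :
    phiPL K m n a f = toZn K (a '' Set.Icc 1 m) n (PhiL K m n a f) := by
  have : phiPL K m n a = (Ideal.Quotient.mkₐ K (Rideal K (a '' Set.Icc 1 m) n)).comp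
      (PhiL K m n a) := by
    apply MvPolynomial.algHom_ext
    intro g
    simp only [phiPL, PhiL, AlgHom.comp_apply, MvPolynomial.aeval_X]
    rfl
  rw [this]; rfl

lemma PhiL_poisson (K : Type) [Field K] (m n : ℕ) (a : ℕ → Circle1) {o : Circle1}
    (h : (((List.range m).map (fun k => a (k+1))).map (coordAt o)).Chain' (· < ·))
    (f g : MvPolynomial (PLIdx m n) K) :
    PhiL K m n a (brPL K m n f g) =
      swapBr K (a '' Set.Icc 1 m) 1 0 (PhiL K m n a f) (PhiL K m n a g) := by
  have hne : ∀ g : PLIdx m n, (ptPL a m g.1.1 ⟨by have := g.2.1; omega, g.2.2.1⟩) ≠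
      (ptPL a m g.1.2 ⟨g.2.2.2.1,
          by have := g.2.1; have := g.2.2.1; have := g.2.2.2.2; omega⟩) := by
    intro g hg
    have h1 : a g.1.1 = a g.1.2 := congrArg Subtype.val hg
    have h2 := coord_mono h (i := g.1.2) (j := g.1.1) g.2.2.2.1
      (by have := g.2.1; have := g.2.2.2.2; omega) g.2.2.1
    rw [h1] at h2
    exact lt_irrefl _ h2
  have hX : ∀ g : PLIdx m n, PhiL K m n a (X g) = X ⟨(_, _), hne g⟩ := by
    intro g
    rw [PhiL, MvPolynomial.aeval_X, gen_of_ne _ _ _ _ (hne g)]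
    rfl
  unfold brPL swapBr
  apply deriv_transfer
  intro p
  rw [hX, mkDerivation_X, mkDerivation_X]
  apply deriv_transfer
  intro q
  rw [hX, mkDerivation_X, mkDerivation_X]
  unfold genPL genBr
  rw [map_smul, map_mul]
  simp only [one_smul, zero_smul, add_zero]
  have := linkQ_pl h p q
  change _ = ((linkQ (a p.1.1) (a p.1.2) (a q.1.1) (a q.1.2) : ℚ) : K) • _
  rw [this]
  congr 1
  simp only [PhiL, MvPolynomial.aeval_X]
  rfl

/-- The left inverse on generators. -/
def psiGen (K : Type) [Field K] (m n : ℕ) (a : ℕ → Circle1) (x y : ↥(a '' Set.Icc 1 m)) :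
    MvPolynomial (PLIdx m n) K :=
  if h : n < x.2.choose ∧ x.2.choose ≤ m ∧ 1 ≤ y.2.choose ∧ y.2.choose ≤ n then
    X (⟨(x.2.choose, y.2.choose), h⟩ : PLIdx m n) else 0

def psiL (K : Type) [Field K] (m n : ℕ) (a : ℕ → Circle1) :
    SwapRing K (a '' Set.Icc 1 m) →ₐ[K] MvPolynomial (PLIdx m n) K :=
  MvPolynomial.aeval (fun q => psiGen K m n a q.1.1 q.1.2)

lemma psiL_gen (K : Type) [Field K] (m n : ℕ) (a : ℕ → Circle1) (x y : ↥(a '' Set.Icc 1 m)) :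
    psiL K m n a (gen K _ x y) = psiGen K m n a x y := by
  by_cases h : x = y
  · subst h
    have : gen K _ x x = 0 := by simp [gen]
    rw [this, map_zero, psiGen, dif_neg]
    omega
  · rw [gen_of_ne _ _ _ _ h, psiL, MvPolynomial.aeval_X]

lemma psiL_ideal (K : Type) [Field K] (m n : ℕ) (a : ℕ → Circle1)
    (f : SwapRing K (a '' Set.Icc 1 m)) (hf : f ∈ Rideal K (a '' Set.Icc 1 m) n) :
    psiL K m n a f = 0 := by
  have : Rideal K (a '' Set.Icc 1 m) n ≤ RingHom.ker (psiL K m n a) := by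
    unfold Rideal
    rw [Ideal.span_le]
    rintro _ ⟨xs, ys, rfl⟩
    change psiL K m n a _ = 0
    unfold Dmat
    rw [AlgHom.map_det]
    by_cases hc : ∃ j, ¬ (ys j).2.choose ≤ n
    · obtain ⟨j, hj⟩ := hc
      apply Matrix.det_eq_zero_of_column_eq_zero j
      intro i
      simp only [AlgHom.mapMatrix_apply, Matrix.map_apply, Matrix.of_apply]
      rw [psiL_gen, psiGen, dif_neg (fun h => hj h.2.2.2)]
    · push Not at hc
      have hpig : ∃ j ∈ (Finset.univ : Finset (Fin (n+1))), ∃ k ∈ Finset.univ, j ≠ k ∧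
          (ys j).2.choose = (ys k).2.choose := by
        apply Finset.exists_ne_map_eq_of_card_lt_of_maps_to (t := Finset.Icc 1 n)
        · simp
        · intro j _
          have := (ys j).2.choose_spec.1.1
          simp only [Finset.coe_Icc, Set.mem_Icc]
          exact ⟨this, hc j⟩
      obtain ⟨j, -, k, -, hjk, he⟩ := hpig
      apply Matrix.det_zero_of_column_eq hjk
      intro i
      simp only [AlgHom.mapMatrix_apply, Matrix.map_apply, Matrix.of_apply]
      have hy : ys j = ys k := by
        apply Subtype.ext
        rw [← (ys j).2.choose_spec.2, ← (ys k).2.choose_spec.2, he]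
      rw [hy]
  exact this hf

lemma psi_phi (K : Type) [Field K] (m n : ℕ) (a : ℕ → Circle1) {o : Circle1}
    (h : (((List.range m).map (fun k => a (k+1))).map (coordAt o)).Chain' (· < ·))
    (f : MvPolynomial (PLIdx m n) K) : psiL K m n a (PhiL K m n a f) = f := by
  have hch : ∀ (i : ℕ) (hi : 1 ≤ i ∧ i ≤ m), (ptPL a m i hi).2.choose = i := by
    intro i hi
    have hs := (ptPL a m i hi).2.choose_spec
    generalize (ptPL a m i hi).2.choose = k at hs
    have h1 : a k = a i := hs.2
    rcases lt_trichotomy k i with hl | hl | hl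
    · have := coord_mono h hs.1.1 hl hi.2
      rw [h1] at this
      exact (lt_irrefl _ this).elim
    · exact hl
    · have := coord_mono h hi.1 hl hs.1.2
      rw [h1] at this
      exact (lt_irrefl _ this).elim
  have : (psiL K m n a).comp (PhiL K m n a) = AlgHom.id K _ := by
    apply MvPolynomial.algHom_ext
    intro g
    rw [AlgHom.comp_apply, PhiL, MvPolynomial.aeval_X, psiL_gen, psiGen, dif_pos]
    · simp only [hch]
      rfl
    · simp only [hch]
      exact g.2
  exact DFunLike.congr_fun this f

/-- For `m > n ≥ 2` and `P = {a_1, …, a_m}` ordered anticlockwise on a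
circle, the homomorphism `φ : K[x_{ij} : n < i ≤ m, 1 ≤ j ≤ n] → Z_n(P)` with
`φ(x_{ij}) = a_i a_j` is injective and Poisson with respect to the standard Poisson–Lie
bracket and the swapping bracket (i.e. the bracket induced on `Z_n(P)` by the swapping
bracket of `Z(P)`). -/
theorem poisson_lie_to_swapping (K : Type) [Field K] [CharZero K]
    (m n : ℕ) (hn : 2 ≤ n) (hm : n < m) (a : ℕ → Circle1)
    (hcfg : AnticlockwiseList ((List.range m).map (fun k => a (k+1)))) :
    Function.Injective (phiPL K m n a) ∧
    ∀ B : ZnRing K (a '' Set.Icc 1 m) n → ZnRing K (a '' Set.Icc 1 m) n →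
          ZnRing K (a '' Set.Icc 1 m) n,
      (∀ f g : SwapRing K (a '' Set.Icc 1 m),
        B (toZn K (a '' Set.Icc 1 m) n f) (toZn K (a '' Set.Icc 1 m) n g)
          = toZn K (a '' Set.Icc 1 m) n (swapBr K (a '' Set.Icc 1 m) 1 0 f g)) →
      ∀ f g : MvPolynomial (PLIdx m n) K,
        phiPL K m n a (brPL K m n f g) = B (phiPL K m n a f) (phiPL K m n a g) := by
  obtain ⟨o, -, h⟩ := hcfg
  refine ⟨?_, ?_⟩
  · rw [injective_iff_map_eq_zero]
    intro f hf
    rw [phi_eq] at hf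
    have := psiL_ideal K m n a _ (Ideal.Quotient.eq_zero_iff_mem.1 hf)
    rwa [psi_phi K m n a h] at this
  · intro B hB f g
    rw [phi_eq, phi_eq, phi_eq, hB, PhiL_poisson K m n a h]

end
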